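/- Let r > 0 be a real number, q ∈ (0,1), c > 0, and define p_t(x,z) as the transition kernel p_Θ with parameter Θ = Θ_t = (1-q)/(e^{ct}-q). Then for all natural numbers i and j with |i - j| ≥ 2, p_t(i, j)/t → 0 as t → 0⁺; that is, the associated continuous-time Markov chain only jumps to nearest-neighbour states, so it is a birth–death (with immigration) process. -/

import Mathlib

/-!
In the `y`-th summand of `p_Θ(x, z)` the powers of `1 - Θ` multiply to
`(1 - Θ) ^ ((z - y) + (x - y))`, and `(z - y) + (x - y) = |x - z| + 2 (min x z - y)`. Hence
`(1 - Θ) ^ |x - z|` factors out of the whole kernel and leaves a cofactor continuous at `Θ = 1`.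
Since `1 - Θ_t = O(t)`, this gives `p_t(x, z) = O(t ^ |x - z|)`.
-/

open Filter Topology

/-- Transition kernel p_Θ(x, z) = ∑_{y=0}^{min(x,z)}
    Γ(z+r)/((z-y)! Γ(y+r)) · [q(1-Θ)]^{z-y} · [1-q(1-Θ)]^{r+y} · C(x,y) Θ^y (1-Θ)^{x-y}. -/
noncomputable def pKer (r q Θ : ℝ) (x z : ℕ) : ℝ :=
  ∑ y ∈ Finset.range (min x z + 1),
    Real.Gamma ((z : ℝ) + r) / (((z - y).factorial : ℝ) * Real.Gamma ((y : ℝ) + r)) *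
      (q * (1 - Θ)) ^ (z - y) * (1 - q * (1 - Θ)) ^ (r + (y : ℝ)) *
      (x.choose y : ℝ) * Θ ^ y * (1 - Θ) ^ (x - y)

open Asymptotics

/-- The kernel `pKer r q Θ x z` with its factor `(1 - Θ) ^ |x - z|` removed. Its value at `Θ = 1` is
the leading coefficient of the kernel there. -/
noncomputable def pKerCofactor (r q Θ : ℝ) (x z : ℕ) : ℝ :=
  ∑ y ∈ Finset.range (min x z + 1),
    Real.Gamma ((z : ℝ) + r) / (((z - y).factorial : ℝ) * Real.Gamma ((y : ℝ) + r)) *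
      q ^ (z - y) * (1 - q * (1 - Θ)) ^ (r + (y : ℝ)) *
      (x.choose y : ℝ) * Θ ^ y * (1 - Θ) ^ (2 * (min x z - y))

/-- The dependence parameter `Θ_t` of the chain at time `t`. -/
noncomputable def dependenceParam (q c t : ℝ) : ℝ :=
  (1 - q) / (Real.exp (c * t) - q)

theorem pKer_eq_pow_mul_pKerCofactor (r q Θ : ℝ) (x z : ℕ) :
    pKer r q Θ x z = (1 - Θ) ^ ((x : ℤ) - z).natAbs * pKerCofactor r q Θ x z := by
  rw [pKer, pKerCofactor, Finset.mul_sum]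
  refine Finset.sum_congr rfl fun y hy => ?_
  have exponent_eq : (z - y) + (x - y) = ((x : ℤ) - z).natAbs + 2 * (min x z - y) := by
    have := Finset.mem_range.1 hy
    omega
  have pow_eq : (1 - Θ) ^ (z - y) * (1 - Θ) ^ (x - y) =
      (1 - Θ) ^ ((x : ℤ) - z).natAbs * (1 - Θ) ^ (2 * (min x z - y)) := by
    rw [← pow_add, ← pow_add, exponent_eq]
  rw [mul_pow]
  linear_combination (Real.Gamma ((z : ℝ) + r) /
    (((z - y).factorial : ℝ) * Real.Gamma ((y : ℝ) + r)) * q ^ (z - y) *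
    (1 - q * (1 - Θ)) ^ (r + (y : ℝ)) * (x.choose y : ℝ) * Θ ^ y) * pow_eq

theorem continuousAt_pKerCofactor_one (r q : ℝ) (x z : ℕ) :
    ContinuousAt (fun Θ => pKerCofactor r q Θ x z) 1 := by
  have continuousAt_rpow (y : ℕ) :
      ContinuousAt (fun Θ : ℝ => (1 - q * (1 - Θ)) ^ (r + (y : ℝ))) 1 :=
    ContinuousAt.rpow_const (by fun_prop) (Or.inl (by simp))
  unfold pKerCofactor
  fun_prop

theorem pKer_isBigO_pow (r q : ℝ) (x z : ℕ) :
    (fun Θ => pKer r q Θ x z) =O[𝓝 1] fun Θ => (1 - Θ) ^ ((x : ℤ) - z).natAbs := by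
  simp_rw [pKer_eq_pow_mul_pKerCofactor]
  simpa only [mul_one] using
    (isBigO_refl _ _).mul ((continuousAt_pKerCofactor_one r q x z).isBigO_one ℝ)

section dependenceParam

variable {q : ℝ} (hq : q ≠ 1) (c : ℝ)

include hq

theorem dependenceParam_zero : dependenceParam q c 0 = 1 := by
  simp [dependenceParam, sub_ne_zero.2 hq.symm]

theorem differentiableAt_dependenceParam_zero : DifferentiableAt ℝ (dependenceParam q c) 0 := by
  have denominator_ne_zero : Real.exp (c * 0) - q ≠ 0 := by simpa using sub_ne_zero.2 hq.symm
  unfold dependenceParam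
  fun_prop (disch := assumption)

theorem tendsto_dependenceParam_zero : Tendsto (dependenceParam q c) (𝓝 0) (𝓝 1) := by
  simpa only [dependenceParam_zero hq c] using
    (differentiableAt_dependenceParam_zero hq c).continuousAt.tendsto

theorem one_sub_dependenceParam_isBigO :
    (fun t => 1 - dependenceParam q c t) =O[𝓝 0] fun t => t := by
  simpa only [dependenceParam_zero hq c, sub_zero, neg_sub] using
    (differentiableAt_dependenceParam_zero hq c).isBigO_sub.neg_left

theorem pKer_dependenceParam_isBigO_pow (r : ℝ) (x z : ℕ) :
    (fun t => pKer r q (dependenceParam q c t) x z) =O[𝓝 0]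
      fun t => t ^ ((x : ℤ) - z).natAbs :=
  ((pKer_isBigO_pow r q x z).comp_tendsto (tendsto_dependenceParam_zero hq c)).trans
    ((one_sub_dependenceParam_isBigO hq c).pow _)

end dependenceParam

theorem pKer_no_distant_jumps_general (r : ℝ) {q : ℝ} (hq : q ≠ 1) (c : ℝ) {i j : ℕ}
    (hij : 2 ≤ |(i : ℤ) - (j : ℤ)|) :
    Tendsto (fun t : ℝ => pKer r q ((1 - q) / (Real.exp (c * t) - q)) i j / t)
      (𝓝[≠] (0 : ℝ)) (𝓝 0) := by
  have one_lt_natAbs : 1 < ((i : ℤ) - j).natAbs := by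
    rw [Int.abs_eq_natAbs] at hij
    omega
  have isLittleO_id : (fun t => pKer r q (dependenceParam q c t) i j) =o[𝓝 0] fun t => t :=
    (pKer_dependenceParam_isBigO_pow hq c r i j).trans_isLittleO (isLittleO_pow_id one_lt_natAbs)
  exact isLittleO_id.tendsto_div_nhds_zero.mono_left nhdsWithin_le_nhds

/-- Nearest-neighbour jumps only: with Θ_t = (1-q)/(e^{ct}-q) and |i - j| ≥ 2,
    p_t(i, j)/t → 0 as t → 0⁺, so the chain is a birth–death (with immigration)
    process. -/
theorem pKer_no_distant_jumps
    (r q c : ℝ) (hr : 0 < r) (hq : q ∈ Set.Ioo (0 : ℝ) 1) (hc : 0 < c)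
    (i j : ℕ) (hij : 2 ≤ |(i : ℤ) - (j : ℤ)|) :
    Tendsto (fun t : ℝ => pKer r q ((1 - q) / (Real.exp (c * t) - q)) i j / t)
      (𝓝[>] (0 : ℝ)) (𝓝 0) :=
  (pKer_no_distant_jumps_general r hq.2.ne c hij).mono_left (nhdsGT_le_nhdsNE 0)
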